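/- Let G = ℤ/2ℤ, so n = 2 and d = 1+√2. The polynomial equations for G have exactly one solution, namely: ε_h(g) = (−1)^{g·h}, η_0 = η_1 = 1, A_0(0,0) = A_1(0,0) = (d−2)/(d−1), A_0(0,1) = A_0(1,0) = A_1(0,1) = A_1(1,0) = −1/(d−1), A_0(1,1) = −1/(d−1), and A_1(1,1) = 1/(d−1). In particular, there is no solution with ε_h(g) = 1 for all g,h ∈ G. -/

import Mathlib

open scoped BigOperators
open Complex

/-- `d = (n + √(n²+4))/2` where `n` is the cardinality of `G`. -/
noncomputable def dR (G : Type) [Fintype G] : ℝ :=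
  ((Fintype.card G : ℝ) + Real.sqrt ((Fintype.card G : ℝ) ^ 2 + 4)) / 2

/-- The complex number `d`. -/
noncomputable def dC (G : Type) [Fintype G] : ℂ := ((dR G : ℝ) : ℂ)

/-- Equation (9) of the polynomial equations, at fixed parameters `g p q x y`. -/
def Eq9At {G : Type} [AddCommGroup G] [Fintype G] [DecidableEq G]
    (ε : G → G → ℂ) (η : G → ℂ) (A : G → G → G → ℂ) (g p q x y : G) : Prop :=
  ∑ l : G, A g (x + y) l * A (g - p + x) (-x) (l + p) * A (g - q + x + y) (-y) (l + q)
    = η g * η (g + q + x) * η (g + p + q + y) *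
        (starRingEnd ℂ) (η (g + p)) * (starRingEnd ℂ) (η (g + x + y)) *
        (starRingEnd ℂ) (η (g + q + x + y)) *
        ε p (g - p + x) * ε (p + x) (g - p + q + y) *
        ε q (g - q + x + y) * ε (q + y) (g - q + x) *
        A g (p + x) (q + x + y) * A (g - p) (q + y) (p + x + y)
      - (if x = (0 : G) then (1 : ℂ) else 0) * (if y = (0 : G) then (1 : ℂ) else 0) *
        η g * η (g + p) * η (g + q) / dC G

/-- Equations (1)–(8) of the polynomial equations for `(ε, η, A)` on a finite abelian
group `G` (with `ε` taking values in `{1, −1}`). -/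
structure PolyEqs1to8 {G : Type} [AddCommGroup G] [Fintype G] [DecidableEq G]
    (ε : G → G → ℂ) (η : G → ℂ) (A : G → G → G → ℂ) : Prop where
  eps_pm : ∀ h g : G, ε h g = 1 ∨ ε h g = -1
  eq1 : ∀ g h k : G, ε (h + k) g = ε h g * ε k (g + h + h)
  eq1' : ∀ h : G, ε h 0 = 1
  eq2 : ∀ g h : G, η (g + h + h) = η g
  eq2' : ∀ g : G, η g ^ 3 = 1
  eq3 : ∀ g : G, ∑ h : G, A g h 0 = -(starRingEnd ℂ) (η g) / dC G
  eq4 : ∀ g g' k : G,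
    ∑ h : G, A g (h - g) k * (starRingEnd ℂ) (A g' (h - g') k)
      = (if g = g' then (1 : ℂ) else 0)
        - (if k = (0 : G) then (1 : ℂ) else 0) * (starRingEnd ℂ) (η g) * η g' / dC G
  eq5 : ∀ g h p q : G,
    A (g + h + h) p q = ε h g * ε h (g + p) * ε h (g + q) * ε h (g + p + q) * A g p q
  eq6 : ∀ g h k : G, A g k h = (starRingEnd ℂ) (A g h k)
  eq7a : ∀ g h k : G,
    A g h k = η g * ε (-k) (g + h) * ε (-k) (g + k) * ε (-k) (g + h + k) * A g (-k) (h - k)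
  eq7b : ∀ g h k : G,
    A g h k = (starRingEnd ℂ) (η g) * ε (-h) (g + h) * ε (-h) (g + k) * ε (-h) (g + h + k) *
      A g (k - h) (-h)
  eq8a : ∀ g h k : G,
    A g h k = η g * η (g + k) * (starRingEnd ℂ) (η (g + h)) * (starRingEnd ℂ) (η (g + h + k)) *
      ε h g * ε h (g + k) * A (g + h) h k
  eq8b : ∀ g h k : G,
    A g h k = (starRingEnd ℂ) (η g) * (starRingEnd ℂ) (η (g + h)) * η (g + k) * η (g + h + k) *
      ε k g * ε k (g + h) * A (g + k) h k

/-- A solution of the polynomial equations (1)–(9) for a finite abelian group `G`. -/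
structure PolySolution {G : Type} [AddCommGroup G] [Fintype G] [DecidableEq G]
    (ε : G → G → ℂ) (η : G → ℂ) (A : G → G → G → ℂ)
    extends PolyEqs1to8 ε η A : Prop where
  eq9 : ∀ g p q x y : G, Eq9At ε η A g p q x y

/-- The bicharacter `ε_h(g) = (−1)^{g·h}` on `ℤ/2ℤ`. -/
noncomputable def epsZ2 : ZMod 2 → ZMod 2 → ℂ := fun h g => (-1 : ℂ) ^ (g.val * h.val)

/-- The explicit solution `A` for `G = ℤ/2ℤ`. -/
noncomputable def AZ2 : ZMod 2 → ZMod 2 → ZMod 2 → ℂ := fun g h k =>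
  if h = 0 ∧ k = 0 then (dC (ZMod 2) - 2) / (dC (ZMod 2) - 1)
  else if h = 1 ∧ k = 1 ∧ g = 1 then 1 / (dC (ZMod 2) - 1)
  else -(1 / (dC (ZMod 2) - 1))

/-!
In closed form, `A_g(h,k) = δ_{h,0} δ_{k,0} - ε_{hk}(g) (d-1)/2`, and since `1/d = d - 2`, the
equations for this candidate are polynomial identities in `d` modulo `d² = 2d + 1`.

Conversely, write `u = A_g(0,0)` and `v = A_g(1,0)`. Equations (3) and (4) with `k = 0` give
`u + v = -conj η_g / d` and `|u|² + |v|² = 1 - 1/d`, while (7) gives `u = η_g u`. The value `u = 0`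
would force `1/d² = 1 - 1/d`, which is false, so `η_g = 1` and `u`, `v` are real. By (7) all of
`A_g(1,0)`, `A_g(0,1)`, `A_g(1,1)` have the same modulus, so (4) with `k = 1` gives `v² = 1/2`;
together with the two equations for `u` and `v` this leaves only `v = -(d-1)/2`. Finally, the
orthogonality of `A_0` and `A_1` in (4) with `k = 1` reads `v² (1 + ε_1(1)) = 0`.
-/

open scoped ComplexConjugate

theorem dR_sq (G : Type) [Fintype G] : dR G ^ 2 = Fintype.card G * dR G + 1 := by
  unfold dR
  have hsqrt := Real.sq_sqrt (show 0 ≤ (Fintype.card G : ℝ) ^ 2 + 4 by positivity)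
  linear_combination hsqrt / 4

theorem dC_sq (G : Type) [Fintype G] : dC G ^ 2 = Fintype.card G * dC G + 1 := by
  unfold dC
  exact_mod_cast dR_sq G

theorem inv_dC (G : Type) [Fintype G] : (dC G)⁻¹ = dC G - Fintype.card G :=
  inv_eq_of_mul_eq_one_right (by linear_combination dC_sq G)

theorem conj_dC (G : Type) [Fintype G] : conj (dC G) = dC G :=
  conj_ofReal _

namespace PolyEqs1to8

section FiniteAbelianGroup

variable {G : Type} [AddCommGroup G] [Fintype G] [DecidableEq G]
  {ε : G → G → ℂ} {η : G → ℂ} {A : G → G → G → ℂ}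

theorem eps_mul_self (H : PolyEqs1to8 ε η A) (h g : G) : ε h g * ε h g = 1 :=
  mul_self_eq_one_iff.2 (H.eps_pm h g)

theorem conj_eps (H : PolyEqs1to8 ε η A) (h g : G) : conj (ε h g) = ε h g := by
  rcases H.eps_pm h g with he | he <;> simp [he]

theorem eps_zero_left (H : PolyEqs1to8 ε η A) (g : G) : ε 0 g = 1 := by
  simpa [H.eps_mul_self] using H.eq1 g 0 0

theorem conj_eta_mul_eta (H : PolyEqs1to8 ε η A) (g : G) : conj (η g) * η g = 1 := by
  simp [conj_mul', norm_eq_one_of_pow_eq_one (H.eq2' g) three_ne_zero]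

theorem A_zero_left (H : PolyEqs1to8 ε η A) (g k : G) :
    A g 0 k = η g * ε (-k) g * A g (-k) (-k) := by
  have h7 := H.eq7a g 0 k
  simp only [add_zero, zero_sub] at h7
  linear_combination h7 + η g * ε (-k) g * A g (-k) (-k) * H.eps_mul_self (-k) (g + k)

theorem eta_eq_one_or_A_zero_zero (H : PolyEqs1to8 ε η A) (g : G) : η g = 1 ∨ A g 0 0 = 0 := by
  have h0 : A g 0 0 = η g * A g 0 0 := by simpa [H.eps_zero_left] using H.A_zero_left g 0
  exact mul_left_eq_self₀.1 h0.symm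

theorem sum_A_mul_conj (H : PolyEqs1to8 ε η A) (g k : G) :
    ∑ h, A g h k * conj (A g h k) = 1 - (if k = 0 then 1 else 0) / dC G := by
  rw [← (Equiv.subRight g).sum_comp fun h => A g h k * conj (A g h k)]
  simpa [mul_assoc, H.conj_eta_mul_eta] using H.eq4 g g k

end FiniteAbelianGroup

end PolyEqs1to8

theorem sum_zmod_two {M : Type*} [AddCommMonoid M] (f : ZMod 2 → M) : ∑ a, f a = f 0 + f 1 :=
  Fin.sum_univ_two f

theorem forall_zmod_two {P : ZMod 2 → Prop} : (∀ a, P a) ↔ P 0 ∧ P 1 :=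
  Fin.forall_fin_two

theorem dR_zmod_two : dR (ZMod 2) = 1 + √2 := by
  have hsqrt : √(2 ^ 2 + 4 : ℝ) = 2 * √2 := by
    rw [show (2 ^ 2 + 4 : ℝ) = 2 ^ 2 * 2 by norm_num, Real.sqrt_mul (by norm_num),
      Real.sqrt_sq (by norm_num)]
  simp only [dR, ZMod.card, Nat.cast_ofNat, hsqrt]
  ring

theorem dC_zmod_two_sq : dC (ZMod 2) ^ 2 = 2 * dC (ZMod 2) + 1 := by
  simpa using dC_sq (ZMod 2)

theorem inv_dC_zmod_two : (dC (ZMod 2))⁻¹ = dC (ZMod 2) - 2 := by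
  simpa using inv_dC (ZMod 2)

theorem inv_dC_zmod_two_sub_one : (dC (ZMod 2) - 1)⁻¹ = (dC (ZMod 2) - 1) / 2 :=
  inv_eq_of_mul_eq_one_right (by linear_combination dC_zmod_two_sq / 2)

theorem dC_zmod_two_ne_two : dC (ZMod 2) ≠ 2 := fun hd => by
  have := dC_zmod_two_sq
  norm_num [hd] at this

theorem epsZ2_eq_ite (h g : ZMod 2) : epsZ2 h g = if h = 1 ∧ g = 1 then -1 else 1 := by
  revert h g
  simp [forall_zmod_two, epsZ2, ZMod.val_one]

theorem AZ2_eq (g h k : ZMod 2) :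
    AZ2 g h k =
      (if h = 0 ∧ k = 0 then 1 else 0) - epsZ2 (h * k) g * ((dC (ZMod 2) - 1) / 2) := by
  have hone : 1 / (dC (ZMod 2) - 1) = (dC (ZMod 2) - 1) / 2 := by
    rw [one_div, inv_dC_zmod_two_sub_one]
  have hzero : (dC (ZMod 2) - 2) / (dC (ZMod 2) - 1) = 1 - (dC (ZMod 2) - 1) / 2 := by
    rw [div_eq_mul_inv, inv_dC_zmod_two_sub_one]
    linear_combination dC_zmod_two_sq / 2
  revert g h k
  simp only [AZ2, hone, hzero]
  simp [forall_zmod_two, epsZ2_eq_ite]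

theorem conj_AZ2 (g h k : ZMod 2) : conj (AZ2 g h k) = AZ2 g h k := by
  simp [AZ2, conj_dC, apply_ite conj, map_ofNat]

theorem AZ2_comm (g h k : ZMod 2) : AZ2 g h k = AZ2 g k h := by
  simp only [AZ2_eq, and_comm, mul_comm]

theorem polyEqs1to8_AZ2 : PolyEqs1to8 epsZ2 (fun _ => 1) AZ2 where
  eps_pm := by simp [forall_zmod_two, epsZ2_eq_ite]
  eq1 := by simp [forall_zmod_two, epsZ2_eq_ite, CharTwo.add_cancel_right]
  eq1' := by simp [epsZ2_eq_ite]
  eq2 _ _ := rfl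
  eq2' _ := one_pow 3
  eq3 _ := by
    simp only [sum_zmod_two, AZ2_eq, epsZ2_eq_ite, mul_zero, zero_ne_one, one_ne_zero, and_true,
      false_and, if_true, if_false, map_one, neg_div, one_div, inv_dC_zmod_two]
    ring
  eq4 := by
    simp only [conj_AZ2]
    simp only [forall_zmod_two, sum_zmod_two, AZ2_eq, epsZ2_eq_ite, CharTwo.sub_eq_add,
      CharTwo.add_self_eq_zero, add_zero, zero_add, mul_zero, zero_mul, mul_one, one_ne_zero,
      zero_ne_one, and_self, and_false, false_and, if_true, if_false, map_one, div_eq_mul_inv,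
      inv_dC_zmod_two]
    grind [dC_zmod_two_sq]
  eq5 := by simp [forall_zmod_two, epsZ2_eq_ite, CharTwo.add_self_eq_zero]
  eq6 g h k := by rw [conj_AZ2, AZ2_comm]
  eq7a := by simp [forall_zmod_two, AZ2_eq, epsZ2_eq_ite, CharTwo.add_self_eq_zero]
  eq7b := by simp [forall_zmod_two, AZ2_eq, epsZ2_eq_ite, CharTwo.add_self_eq_zero]
  eq8a := by simp [forall_zmod_two, AZ2_eq, epsZ2_eq_ite]
  eq8b := by simp [forall_zmod_two, AZ2_eq, epsZ2_eq_ite]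

-- At each of the 32 tuples, the closed form of `AZ2` turns (9) into a polynomial identity in `d`
-- modulo `d² = 2d + 1`.
theorem eq9At_AZ2 : ∀ g p q x y, Eq9At epsZ2 (fun _ => 1) AZ2 g p q x y := by
  simp only [Eq9At, forall_zmod_two, sum_zmod_two, AZ2_eq, epsZ2_eq_ite, CharTwo.sub_eq_add,
    CharTwo.neg_eq, CharTwo.add_self_eq_zero, add_zero, zero_add, mul_zero, zero_mul, mul_one,
    one_mul, one_ne_zero, zero_ne_one, and_self, and_false, false_and, if_true, if_false, map_one,
    div_eq_mul_inv, inv_dC_zmod_two]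
  grind [dC_zmod_two_sq]

namespace PolyEqs1to8

section ZModTwo

variable {ε : ZMod 2 → ZMod 2 → ℂ} {η : ZMod 2 → ℂ} {A : ZMod 2 → ZMod 2 → ZMod 2 → ℂ}

theorem A_zero_zero_add_A_one_zero (H : PolyEqs1to8 ε η A) (g : ZMod 2) :
    A g 0 0 + A g 1 0 = conj (η g) * (2 - dC (ZMod 2)) := by
  have h3 := H.eq3 g
  rw [sum_zmod_two, div_eq_mul_inv, inv_dC_zmod_two] at h3
  linear_combination h3

theorem A_zero_zero_mul_conj_add_A_one_zero_mul_conj (H : PolyEqs1to8 ε η A)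
    (g : ZMod 2) :
    A g 0 0 * conj (A g 0 0) + A g 1 0 * conj (A g 1 0) = 3 - dC (ZMod 2) := by
  have h4 := H.sum_A_mul_conj g 0
  rw [sum_zmod_two, if_pos rfl, one_div, inv_dC_zmod_two] at h4
  linear_combination h4

theorem eta_eq_one (H : PolyEqs1to8 ε η A) (g : ZMod 2) : η g = 1 := by
  refine (H.eta_eq_one_or_A_zero_zero g).resolve_right fun hu => ?_
  have hv : A g 1 0 = conj (η g) * (2 - dC (ZMod 2)) := by
    simpa [hu] using H.A_zero_zero_add_A_one_zero g
  have hnorm : (conj (η g) * η g) * (2 - dC (ZMod 2)) ^ 2 = 3 - dC (ZMod 2) := by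
    have := H.A_zero_zero_mul_conj_add_A_one_zero_mul_conj g
    simp only [hu, hv, map_mul, map_sub, conj_conj, conj_dC, map_ofNat] at this
    linear_combination this
  rw [H.conj_eta_mul_eta] at hnorm
  exact dC_zmod_two_ne_two (by linear_combination dC_zmod_two_sq - hnorm)

theorem A_zero_zero_eq_sub (H : PolyEqs1to8 ε η A) (g : ZMod 2) :
    A g 0 0 = 2 - dC (ZMod 2) - A g 1 0 := by
  rw [eq_sub_iff_add_eq]
  simpa [H.eta_eq_one] using H.A_zero_zero_add_A_one_zero g

theorem A_zero_one (H : PolyEqs1to8 ε η A) (g : ZMod 2) : A g 0 1 = ε 1 g * A g 1 1 := by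
  simpa [H.eta_eq_one, CharTwo.neg_eq] using H.A_zero_left g 1

theorem conj_A_one_zero (H : PolyEqs1to8 ε η A) (g : ZMod 2) : conj (A g 1 0) = A g 1 0 := by
  have hv : A g 1 0 = 2 - dC (ZMod 2) - A g 0 0 := by
    linear_combination H.A_zero_zero_eq_sub g
  rw [hv, map_sub, map_sub, conj_dC, ← H.eq6 g 0 0, map_ofNat]

theorem A_zero_one_eq_A_one_zero (H : PolyEqs1to8 ε η A) (g : ZMod 2) : A g 0 1 = A g 1 0 := by
  rw [H.eq6 g 1 0, H.conj_A_one_zero]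

theorem A_one_one (H : PolyEqs1to8 ε η A) (g : ZMod 2) : A g 1 1 = ε 1 g * A g 1 0 := by
  linear_combination A g 1 1 * -H.eps_mul_self 1 g - ε 1 g * H.A_zero_one g +
    ε 1 g * H.A_zero_one_eq_A_one_zero g

theorem A_one_zero_sq (H : PolyEqs1to8 ε η A) (g : ZMod 2) : A g 1 0 ^ 2 = 1 / 2 := by
  have h4 := H.sum_A_mul_conj g 1
  simp only [sum_zmod_two, H.A_zero_one_eq_A_one_zero, H.A_one_one, map_mul, H.conj_eps,
    H.conj_A_one_zero, one_ne_zero, if_false, zero_div, sub_zero] at h4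
  linear_combination h4 / 2 - A g 1 0 ^ 2 / 2 * H.eps_mul_self 1 g

theorem A_one_zero (H : PolyEqs1to8 ε η A) (g : ZMod 2) :
    A g 1 0 = -((dC (ZMod 2) - 1) / 2) := by
  have hnorm : A g 0 0 ^ 2 + A g 1 0 ^ 2 = 3 - dC (ZMod 2) := by
    have := H.A_zero_zero_mul_conj_add_A_one_zero_mul_conj g
    rwa [← H.eq6 g 0 0, H.conj_A_one_zero, ← sq, ← sq] at this
  have hlin : 2 * (2 - dC (ZMod 2)) * A g 1 0 = 3 - dC (ZMod 2) := by
    rw [H.A_zero_zero_eq_sub] at hnorm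
    linear_combination dC_zmod_two_sq + 2 * H.A_one_zero_sq g - hnorm
  linear_combination -dC (ZMod 2) / 2 * hlin - (A g 1 0 - 1 / 2) * dC_zmod_two_sq

theorem A_zero_zero (H : PolyEqs1to8 ε η A) (g : ZMod 2) :
    A g 0 0 = 1 - (dC (ZMod 2) - 1) / 2 := by
  linear_combination H.A_zero_zero_eq_sub g - H.A_one_zero g

theorem eps_one_one (H : PolyEqs1to8 ε η A) : ε 1 1 = -1 := by
  have horth : A 0 1 0 * (ε 1 1 * A 1 1 0) + A 0 1 0 * A 1 1 0 = 0 := by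
    simpa [sum_zmod_two, H.A_one_one, H.A_zero_one_eq_A_one_zero, H.eq1', H.conj_eps,
      H.conj_A_one_zero] using H.eq4 0 1 1
  rw [H.A_one_zero 0, ← H.A_one_zero 1] at horth
  linear_combination 2 * horth - 2 * (1 + ε 1 1) * H.A_one_zero_sq 1

theorem eps_eq_epsZ2 (H : PolyEqs1to8 ε η A) : ε = epsZ2 := by
  ext h g
  revert h g
  simp [forall_zmod_two, epsZ2_eq_ite, H.eps_zero_left, H.eq1', H.eps_one_one]

theorem A_eq_AZ2 (H : PolyEqs1to8 ε η A) : A = AZ2 := by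
  ext g h k
  revert g h k
  simp [forall_zmod_two, AZ2_eq, epsZ2_eq_ite, H.A_zero_zero, H.A_zero_one_eq_A_one_zero,
    H.A_one_zero, H.A_one_one, H.eq1', H.eps_one_one]

end ZModTwo

end PolyEqs1to8

theorem polySolution_AZ2 : PolySolution epsZ2 (fun _ => 1) AZ2 :=
  ⟨polyEqs1to8_AZ2, eq9At_AZ2⟩

theorem not_polyEqs1to8_eps_one (η : ZMod 2 → ℂ) (A : ZMod 2 → ZMod 2 → ZMod 2 → ℂ) :
    ¬ PolyEqs1to8 (fun _ _ => 1) η A := fun H => by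
  have h11 : (1 : ℂ) = -1 := H.eps_one_one
  norm_num at h11

theorem polySolution_zmod_two_unique_general :
    dR (ZMod 2) = 1 + √2 ∧
    (∀ (ε : ZMod 2 → ZMod 2 → ℂ) (η : ZMod 2 → ℂ) (A : ZMod 2 → ZMod 2 → ZMod 2 → ℂ),
      (PolySolution ε η A ↔ PolyEqs1to8 ε η A) ∧
      (PolyEqs1to8 ε η A ↔ (ε = epsZ2 ∧ η = fun _ => 1) ∧ A = AZ2)) ∧
    ¬ ∃ (η : ZMod 2 → ℂ) (A : ZMod 2 → ZMod 2 → ZMod 2 → ℂ),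
        PolyEqs1to8 (fun _ _ => (1 : ℂ)) η A := by
  have hforced {ε η A} (H : PolyEqs1to8 ε η A) : (ε = epsZ2 ∧ η = fun _ => 1) ∧ A = AZ2 :=
    ⟨⟨H.eps_eq_epsZ2, funext H.eta_eq_one⟩, H.A_eq_AZ2⟩
  refine ⟨dR_zmod_two, fun ε η A => ⟨⟨PolySolution.toPolyEqs1to8, fun H => ?_⟩, hforced, ?_⟩,
    fun ⟨η, A, H⟩ => not_polyEqs1to8_eps_one η A H⟩
  · obtain ⟨⟨rfl, rfl⟩, rfl⟩ := hforced H
    exact polySolution_AZ2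
  · rintro ⟨⟨rfl, rfl⟩, rfl⟩
    exact polyEqs1to8_AZ2

/-- For `G = ℤ/2ℤ` (where `d = 1+√2`), the polynomial equations have exactly one solution,
namely `ε_h(g) = (−1)^{gh}`, `η = 1`, and the explicit `A` above.  In particular there is no
solution with trivial `ε`. -/
theorem polySolution_zmod_two_unique :
    dR (ZMod 2) = 1 + Real.sqrt 2 ∧
    (∀ (ε : ZMod 2 → ZMod 2 → ℂ) (η : ZMod 2 → ℂ) (A : ZMod 2 → ZMod 2 → ZMod 2 → ℂ),
      PolySolution ε η A ↔ (ε = epsZ2 ∧ η = fun _ => 1) ∧ A = AZ2) ∧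
    ¬ ∃ (η : ZMod 2 → ℂ) (A : ZMod 2 → ZMod 2 → ZMod 2 → ℂ),
        PolySolution (fun _ _ => (1 : ℂ)) η A :=
  have ⟨hd, hunique, htrivial⟩ := polySolution_zmod_two_unique_general
  ⟨hd, fun ε η A => (hunique ε η A).1.trans (hunique ε η A).2,
    fun ⟨η, A, H⟩ => htrivial ⟨η, A, H.toPolyEqs1to8⟩⟩
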